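/- For −1 < γ < 0, λ > 0, and δ ∈ ℝ, the function f(t) = t^{δ−1}·W_{γ,δ}(−λt^γ) for t > 0 has Laplace transform L[f](s) = s^{−δ}·exp(−λ s^{−γ}) for s > 0. -/

import Mathlib

/-- The Wright function `W_{γ,δ}(z) = ∑_{k=0}^∞ zᵏ/(k!Γ(γk+δ))` (real version). -/
noncomputable def wright (γ δ : ℝ) (z : ℝ) : ℝ :=
  ∑' k : ℕ, z ^ k / ((k.factorial : ℝ) * Real.Gamma (γ * k + δ))

open MeasureTheory Filter Topology Set

namespace WL

lemma integrable_exp_neg_abs {κ : ℝ} (hκ : 0 < κ) :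
    Integrable (fun x : ℝ => Real.exp (-κ * |x|)) := by
  rw [← integrableOn_univ, ← Iic_union_Ioi (a := (0:ℝ)), integrableOn_union]
  constructor
  · refine (integrableOn_exp_mul_Iic hκ 0).congr_fun (fun x hx => ?_) measurableSet_Iic
    simp only [abs_of_nonpos (show x ≤ 0 from hx)]; ring_nf
  · refine (integrableOn_exp_mul_Ioi (a := -κ) (by linarith) 0).congr_fun (fun x hx => ?_)
      measurableSet_Ioi
    simp only [abs_of_pos (show 0 < x from hx)]

lemma exp_bound {b q : ℝ} (hb : 0 < b) (hq : 0 < q) (m : ℝ) :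
    ∃ C : ℝ, 0 < C ∧ ∀ x : ℝ, 0 ≤ x → Real.exp (m * x) * Real.exp (-b * Real.exp (q * x)) ≤ C := by
  obtain ⟨n, hn⟩ := exists_nat_ge (m / q)
  refine ⟨n.factorial / b ^ n, by positivity, fun x hx => ?_⟩
  have h1 := Real.pow_div_factorial_le_exp (b * Real.exp (q * x)) (by positivity) n
  have h2 : Real.exp (m * x) ≤ (Real.exp (q * x)) ^ n := by
    rw [← Real.exp_nat_mul]
    apply Real.exp_le_exp.2
    have : m ≤ n * q := by rwa [div_le_iff₀ hq] at hn
    nlinarith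
  rw [mul_pow] at h1
  rw [neg_mul, Real.exp_neg, ← div_eq_mul_inv, div_le_div_iff₀ (by positivity) (by positivity)]
  rw [div_le_iff₀ (by positivity)] at h1
  nlinarith [pow_pos hb n]

lemma exp_absorb {a b l : ℝ} (ha : 0 < a) (ha1 : a < 1) (hb : 0 < b) (hl : 0 < l) :
    ∃ K : ℝ, ∀ x : ℝ, l * Real.exp (a * x) ≤ K + b * Real.exp x := by
  set y := Real.log (l / b) / (1 - a) with hy
  refine ⟨l * Real.exp (a * y), fun x => ?_⟩
  rcases le_total x y with h | h
  · have : Real.exp (a * x) ≤ Real.exp (a * y) := Real.exp_le_exp.2 (by nlinarith)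
    have := Real.exp_pos x
    nlinarith
  · have h1 : l / b ≤ Real.exp ((1 - a) * x) := by
      rw [← Real.log_le_iff_le_exp (by positivity)]
      rw [hy, div_le_iff₀ (by linarith)] at h
      linarith
    rw [div_le_iff₀ hb] at h1
    have h2 : Real.exp x = Real.exp (a * x) * Real.exp ((1 - a) * x) := by
      rw [← Real.exp_add]; ring_nf
    rw [h2]
    have := Real.exp_pos (a * x)
    have := Real.exp_pos (a * y)
    nlinarith

lemma exp_abs_bound {a b l μ : ℝ} (ha : 0 < a) (ha1 : a < 1) (hb : 0 < b) (hl : 0 < l)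
    (hμ : 0 < μ) :
    ∃ C : ℝ, 0 < C ∧ ∀ x : ℝ,
      Real.exp (μ * x) * Real.exp (l * Real.exp (a * x)) * Real.exp (-b * Real.exp x)
        ≤ C * Real.exp (-μ * |x|) := by
  obtain ⟨K, hK⟩ := exp_absorb ha ha1 (half_pos hb) hl
  obtain ⟨C, hC, h⟩ := exp_bound (half_pos hb) one_pos (2 * μ)
  refine ⟨Real.exp K * (1 + C), by positivity, fun x => ?_⟩
  have h0 : Real.exp (μ * x) * Real.exp (l * Real.exp (a * x)) * Real.exp (-b * Real.exp x)
      ≤ Real.exp K * (Real.exp (μ * x) * Real.exp (-(b/2) * Real.exp x)) := by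
    simp only [← Real.exp_add]
    apply Real.exp_le_exp.2
    have := hK x
    nlinarith
  refine h0.trans ?_
  rw [mul_assoc]
  apply mul_le_mul_of_nonneg_left _ (Real.exp_pos _).le
  rcases le_total x 0 with hx | hx
  · rw [abs_of_nonpos hx, show -μ * -x = μ * x by ring]
    have h1 : Real.exp (-(b/2) * Real.exp x) ≤ 1 := by
      rw [Real.exp_le_one_iff]; have := Real.exp_pos x; nlinarith
    have := Real.exp_pos (μ * x)
    nlinarith
  · have h1 := h x hx
    rw [one_mul] at h1
    rw [abs_of_nonneg hx]
    have h2 : Real.exp (μ * x) = Real.exp (2 * μ * x) * Real.exp (-μ * x) := by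
      rw [← Real.exp_add]; ring_nf
    rw [h2]
    have := Real.exp_pos (-μ * x)
    nlinarith

lemma shift {H : ℂ → ℂ} {y₁ y₂ : ℝ} (hy : y₁ ≤ y₂)
    (hd : DifferentiableOn ℂ H {z | z.im ∈ Icc y₁ y₂}) {C κ X₀ : ℝ} (hκ : 0 < κ)
    (hb : ∀ x y : ℝ, y₁ ≤ y → y ≤ y₂ → X₀ ≤ |x| →
      ‖H (x + y * Complex.I)‖ ≤ C * Real.exp (-κ * |x|)) :
    Tendsto (fun T : ℝ => (∫ x in (-T)..T, H (x + y₁ * Complex.I)) -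
      ∫ x in (-T)..T, H (x + y₂ * Complex.I)) atTop (𝓝 0) := by
  have key : ∀ T : ℝ, 0 ≤ T → X₀ ≤ T → ‖(∫ x in (-T)..T, H (x + y₁ * Complex.I)) -
      ∫ x in (-T)..T, H (x + y₂ * Complex.I)‖ ≤ 2 * (C * Real.exp (-κ * T) * |y₂ - y₁|) := by
    intro T hT hX
    have h := Complex.integral_boundary_rect_eq_zero_of_differentiableOn H
      (⟨-T, y₁⟩ : ℂ) (⟨T, y₂⟩ : ℂ) (hd.mono (by
        intro z hz
        rw [Complex.mem_reProdIm] at hz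
        have := hz.2
        simpa [uIcc_of_le hy] using this))
    simp only at h
    have e1 : ‖∫ y : ℝ in y₁..y₂, H ((T:ℝ) + y * Complex.I)‖ ≤ C * Real.exp (-κ * T) * |y₂ - y₁| := by
      apply intervalIntegral.norm_integral_le_of_norm_le_const
      intro y hy'
      rw [uIoc_of_le hy] at hy'
      have := hb T y hy'.1.le hy'.2 (by rwa [abs_of_nonneg hT])
      rwa [abs_of_nonneg hT] at this
    have e2 : ‖∫ y : ℝ in y₁..y₂, H ((-T:ℝ) + y * Complex.I)‖ ≤ C * Real.exp (-κ * T) * |y₂ - y₁| := by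
      apply intervalIntegral.norm_integral_le_of_norm_le_const
      intro y hy'
      rw [uIoc_of_le hy] at hy'
      have := hb (-T) y hy'.1.le hy'.2 (by rwa [abs_neg, abs_of_nonneg hT])
      rwa [abs_neg, abs_of_nonneg hT] at this
    have h' : (∫ x in (-T)..T, H (x + y₁ * Complex.I)) - ∫ x in (-T)..T, H (x + y₂ * Complex.I)
      = Complex.I • (∫ y : ℝ in y₁..y₂, H ((-T:ℝ) + y * Complex.I)) -
        Complex.I • ∫ y : ℝ in y₁..y₂, H ((T:ℝ) + y * Complex.I) := by
      linear_combination h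
    rw [h']
    refine (norm_sub_le _ _).trans ?_
    rw [norm_smul, norm_smul, Complex.norm_I]
    linarith
  have hlim : Tendsto (fun T : ℝ => 2 * (C * Real.exp (-κ * T) * |y₂ - y₁|)) atTop (𝓝 0) := by
    have : Tendsto (fun T : ℝ => Real.exp (-κ * T)) atTop (𝓝 0) := by
      apply Real.tendsto_exp_atBot.comp
      exact tendsto_id.const_mul_atTop_of_neg (by linarith)
    simpa using ((this.const_mul C).mul_const |y₂ - y₁|).const_mul 2
  refine squeeze_zero_norm' ?_ hlim
  filter_upwards [eventually_ge_atTop 0, eventually_ge_atTop X₀] with T h1 h2 using key T h1 h2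

lemma integral_comp_exp (g : ℝ → ℝ) :
    ∫ r in Ioi (0:ℝ), g r = ∫ x : ℝ, Real.exp x * g (Real.exp x) := by
  have h := integral_image_eq_integral_abs_deriv_smul (s := univ) (f := Real.exp) (f' := Real.exp)
    MeasurableSet.univ (fun x _ => (Real.hasDerivAt_exp x).hasDerivWithinAt)
    Real.exp_injective.injOn g
  rw [image_univ, Real.range_exp] at h
  rw [h]
  simp [Real.abs_exp]

lemma gamma_line {μ t : ℝ} (hμ : 0 < μ) (ht : 0 < t) :
    ∫ x : ℝ, Real.exp (μ * x) * Real.exp (-t * Real.exp x) = t ^ (-μ) * Real.Gamma μ := by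
  have h := Real.integral_rpow_mul_exp_neg_mul_Ioi hμ ht
  rw [integral_comp_exp] at h
  rw [Real.rpow_neg ht.le, ← Real.inv_rpow ht.le, inv_eq_one_div, ← h]
  congr 1; ext x
  rw [← mul_assoc, ← Real.exp_mul, ← Real.exp_add, ← Real.exp_add, ← Real.exp_add]
  ring_nf

lemma re_exp_line (x y : ℝ) : (Complex.exp (x + y * Complex.I)).re = Real.exp x * Real.cos y := by
  simp [Complex.exp_re]

lemma norm_exp_line (m x y : ℝ) : ‖Complex.exp (m * (x + y * Complex.I))‖ = Real.exp (m * x) := by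
  simp [Complex.norm_exp]

lemma norm_expexp_line (t x y : ℝ) : ‖Complex.exp (t * Complex.exp (x + y * Complex.I))‖
    = Real.exp (t * (Real.exp x * Real.cos y)) := by
  rw [Complex.norm_exp, Complex.re_ofReal_mul, re_exp_line]

lemma hankel_mono {μ t η : ℝ} (hμ : 0 < μ) (ht : 0 < t) (h1 : Real.pi / 2 < η) (h2 : η < Real.pi) :
    (∫ x : ℝ, Complex.exp (t * Complex.exp (x + η * Complex.I)) *
      Complex.exp (μ * (x + η * Complex.I))).im = Real.pi * (t ^ (-μ) / Real.Gamma (1 - μ)) := by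
  set H : ℂ → ℂ := fun w => Complex.exp (t * Complex.exp w) * Complex.exp (μ * w) with hH
  have hc : 0 < -Real.cos η := by
    have := Real.cos_neg_of_pi_div_two_lt_of_lt h1 (by linarith); linarith
  obtain ⟨C, hC, hCb⟩ := exp_abs_bound (a := 1/2) (b := t * -Real.cos η) (l := 1) (μ := μ)
    (by norm_num) (by norm_num) (by positivity) one_pos hμ
  have hbd : ∀ x y : ℝ, η ≤ y → y ≤ Real.pi →
      ‖H (x + y * Complex.I)‖ ≤ C * Real.exp (-μ * |x|) := by
    intro x y hy1 hy2
    refine le_trans ?_ (hCb x)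
    simp only [hH]
    rw [norm_mul, norm_expexp_line, norm_exp_line, ← Real.exp_add, ← Real.exp_add, ← Real.exp_add]
    apply Real.exp_le_exp.2
    have e1 : Real.cos y ≤ Real.cos η :=
      Real.cos_le_cos_of_nonneg_of_le_pi (by linarith [Real.pi_pos]) hy2 hy1
    have e2 := mul_le_mul_of_nonneg_left e1 (mul_pos ht (Real.exp_pos x)).le
    have e3 := Real.exp_pos (1/2 * x)
    nlinarith
  have hdiff : Differentiable ℂ H := by fun_prop
  have hIntg : ∀ y : ℝ, η ≤ y → y ≤ Real.pi → Integrable (fun x : ℝ => H (x + y * Complex.I)) := by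
    intro y hy1 hy2
    refine Integrable.mono' ((integrable_exp_neg_abs hμ).const_mul C) ?_
      (Eventually.of_forall fun x => hbd x y hy1 hy2)
    have := hdiff.continuous
    exact Continuous.aestronglyMeasurable (by fun_prop)
  have hs := shift (y₁ := η) (y₂ := Real.pi) (H := H) h2.le hdiff.differentiableOn (X₀ := 0) hμ
    (fun x y hy1 hy2 _ => hbd x y hy1 hy2)
  have hs' := (intervalIntegral_tendsto_integral (hIntg η le_rfl h2.le) tendsto_neg_atTop_atBot
    tendsto_id).sub (intervalIntegral_tendsto_integral (hIntg Real.pi h2.le le_rfl)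
      tendsto_neg_atTop_atBot tendsto_id)
  have he := sub_eq_zero.1 (tendsto_nhds_unique hs' hs)
  change (∫ x : ℝ, H (x + η * Complex.I)).im = _
  rw [he]
  have hH2 : ∀ x : ℝ, H (x + Real.pi * Complex.I) =
      ((Real.exp (μ * x) * Real.exp (-t * Real.exp x) : ℝ) : ℂ) *
        Complex.exp ((μ * Real.pi : ℝ) * Complex.I) := by
    intro x
    simp only [hH]
    rw [Complex.exp_add_pi_mul_I]
    push_cast
    rw [mul_add, Complex.exp_add]
    ring_nf
  simp_rw [hH2]
  rw [integral_mul_const, integral_complex_ofReal, gamma_line hμ ht, Complex.im_ofReal_mul,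
    Complex.exp_ofReal_mul_I_im]
  have hg := Real.Gamma_mul_Gamma_one_sub μ
  have hg0 := (Real.Gamma_pos_of_pos hμ).ne'
  by_cases hsn : Real.sin (Real.pi * μ) = 0
  · rw [hsn, div_zero, mul_eq_zero] at hg
    have h0 : Real.Gamma (1 - μ) = 0 := by tauto
    rw [mul_comm μ, hsn, h0]; simp
  · have hne : Real.Gamma (1 - μ) ≠ 0 := by
      intro h0
      rw [h0, mul_zero] at hg
      have := div_ne_zero Real.pi_ne_zero hsn
      exact this hg.symm
    rw [eq_div_iff hsn] at hg
    rw [mul_comm μ, ← mul_div_assoc, eq_div_iff hne]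
    linear_combination t ^ (-μ) * hg

structure Nice (G : ℂ → ℂ) (η C ε : ℝ) : Prop where
  diff : Differentiable ℂ G
  real : ∀ x : ℝ, (G x).im = 0
  eps_pos : 0 < ε
  eps_le : ε ≤ 1 / 2
  C_nonneg : 0 ≤ C
  bound : ∀ x y : ℝ, 0 ≤ y → y ≤ η →
    ‖G (x + y * Complex.I)‖ ≤ C * (Real.exp (ε * x) + Real.exp ((1 - ε) * x))

lemma kernel_bound {s c ε : ℝ} (hs : 0 < s) (hc : 0 < c) (hε : 0 < ε) (hε2 : ε ≤ 1 / 2) (x : ℝ) :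
    (Real.exp (ε * x) + Real.exp ((1 - ε) * x)) / (s + c * Real.exp x)
      ≤ (2 / s + 2 / c) * Real.exp (-ε * |x|) := by
  have hex := Real.exp_pos x
  have hE := Real.exp_pos (-ε * |x|)
  rcases le_total x 0 with hx | hx
  · have e1 : Real.exp ((1 - ε) * x) ≤ Real.exp (ε * x) := Real.exp_le_exp.2 (by nlinarith)
    have e2 : -ε * |x| = ε * x := by rw [abs_of_nonpos hx]; ring
    rw [e2] at hE ⊢
    calc _ ≤ (2 * Real.exp (ε * x)) / s := by
          gcongr
          · linarith
          · nlinarith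
      _ ≤ _ := by
          have : 0 < 2 / c * Real.exp (ε * x) := by positivity
          have h2 : 2 * Real.exp (ε * x) / s = 2 / s * Real.exp (ε * x) := by ring
          rw [h2]; linarith
  · have e1 : Real.exp (ε * x) ≤ Real.exp ((1 - ε) * x) := Real.exp_le_exp.2 (by nlinarith)
    have e2 : Real.exp ((1 - ε) * x) = Real.exp x * Real.exp (-ε * |x|) := by
      rw [abs_of_nonneg hx, ← Real.exp_add]; ring_nf
    calc _ ≤ (2 * Real.exp ((1 - ε) * x)) / (c * Real.exp x) := by
          gcongr
          · linarith
          · linarith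
      _ = 2 / c * Real.exp (-ε * |x|) := by rw [e2]; field_simp
      _ ≤ _ := by
          have : 0 < 2 / s * Real.exp (-ε * |x|) := by positivity
          linarith

lemma norm_den (s x y : ℝ) (hs : 0 < s) (hx : |Real.log (2 * s)| + |Real.log (s / 2)| ≤ |x|) :
    s / 4 + 1 / 4 * Real.exp x ≤ ‖(s : ℂ) - Complex.exp (x + y * Complex.I)‖ := by
  have hn : ‖Complex.exp (x + y * Complex.I)‖ = Real.exp x := by simp [Complex.norm_exp]
  have h1 := abs_norm_sub_norm_le (s : ℂ) (Complex.exp (x + y * Complex.I))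
  rw [hn, Complex.norm_real, Real.norm_of_nonneg hs.le] at h1
  refine le_trans ?_ h1
  have hex := Real.exp_pos x
  rcases le_total x 0 with hx0 | hx0
  · rw [abs_of_nonpos hx0] at hx
    have : x ≤ Real.log (s / 2) := by
      have := neg_abs_le (Real.log (s / 2)); have := abs_nonneg (Real.log (2 * s)); linarith
    have h2 : Real.exp x ≤ s / 2 := by
      rw [← Real.exp_log (show 0 < s / 2 by positivity)]; exact Real.exp_le_exp.2 this
    have := le_abs_self (s - Real.exp x)
    linarith
  · rw [abs_of_nonneg hx0] at hx
    have : Real.log (2 * s) ≤ x := by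
      have := le_abs_self (Real.log (2 * s)); have := abs_nonneg (Real.log (s / 2)); linarith
    have h2 : 2 * s ≤ Real.exp x := by
      rw [← Real.exp_log (show 0 < 2 * s by positivity)]; exact Real.exp_le_exp.2 this
    have := neg_abs_le (s - Real.exp x)
    linarith

lemma norm_den_ray (s x η : ℝ) :
    s + (-Real.cos η) * Real.exp x ≤ ‖(s : ℂ) - Complex.exp (x + η * Complex.I)‖ := by
  refine le_trans ?_ (Complex.re_le_norm _)
  rw [Complex.sub_re, re_exp_line, Complex.ofReal_re]
  linarith

lemma Nice.ray_bound {G : ℂ → ℂ} {η C ε s : ℝ} (h : Nice G η C ε) (hs : 0 < s)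
    (h1 : 0 ≤ η) (hc : 0 < -Real.cos η) (x : ℝ) :
    ‖G (x + η * Complex.I)‖ / (s + (-Real.cos η) * Real.exp x)
      ≤ C * ((2 / s + 2 / (-Real.cos η)) * Real.exp (-ε * |x|)) := by
  have h2 := h.bound x η h1 le_rfl
  have h3 := kernel_bound hs hc h.eps_pos h.eps_le x
  have hp : 0 < s + (-Real.cos η) * Real.exp x := by positivity
  calc _ ≤ C * (Real.exp (ε * x) + Real.exp ((1 - ε) * x)) / (s + (-Real.cos η) * Real.exp x) := by
        gcongr
    _ = C * ((Real.exp (ε * x) + Real.exp ((1 - ε) * x)) / (s + (-Real.cos η) * Real.exp x)) := by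
        ring
    _ ≤ _ := mul_le_mul_of_nonneg_left h3 h.C_nonneg

lemma den_ne {s : ℝ} (hs : 0 < s) {w : ℂ} (h0 : 0 ≤ w.im) (h1 : w.im < 2 * Real.pi)
    (hw : w ≠ (Real.log s : ℂ)) : Complex.exp w ≠ s := by
  intro h
  have h2 : (s : ℂ) = Complex.exp (Real.log s : ℂ) := by
    rw [← Complex.ofReal_exp, Real.exp_log hs]
  rw [h2, Complex.exp_eq_exp_iff_exists_int] at h
  obtain ⟨n, hn⟩ := h
  have him : w.im = n * (2 * Real.pi) := by rw [hn]; simp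
  have hp := Real.pi_pos
  have hn0 : n = 0 := by
    rw [him] at h0 h1
    have a1 : (n : ℝ) < 1 := by nlinarith
    have a2 : (-1 : ℝ) < n := by nlinarith
    have a1' : n < 1 := by exact_mod_cast a1
    have a2' : -1 < n := by exact_mod_cast a2
    omega
  apply hw
  rw [hn, hn0]; simp

lemma Nice.ray_integrable {G : ℂ → ℂ} {η C ε s : ℝ} (h : Nice G η C ε) (hs : 0 < s)
    (h1 : Real.pi / 2 < η) (h2 : η < Real.pi) :
    Integrable (fun x : ℝ => G (x + η * Complex.I) / (s - Complex.exp (x + η * Complex.I))) := by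
  have hp := Real.pi_pos
  have hc : 0 < -Real.cos η := by
    have := Real.cos_neg_of_pi_div_two_lt_of_lt h1 (by linarith); linarith
  have hden : ∀ x : ℝ, 0 < s + (-Real.cos η) * Real.exp x := fun x => by positivity
  refine Integrable.mono' (((integrable_exp_neg_abs h.eps_pos).const_mul
    (2 / s + 2 / (-Real.cos η))).const_mul C) ?_ (Eventually.of_forall fun x => ?_)
  · have := h.diff.continuous
    refine Continuous.aestronglyMeasurable (Continuous.div (by fun_prop) (by fun_prop) fun x => ?_)
    rw [← norm_pos_iff]
    exact (hden x).trans_le (norm_den_ray s x η)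
  · refine le_trans ?_ (h.ray_bound hs (by linarith) hc x)
    rw [norm_div]
    exact div_le_div_of_nonneg_left (norm_nonneg _) (hden x) (norm_den_ray s x η)

lemma Nice.contour {G : ℂ → ℂ} {η C ε s : ℝ} (h : Nice G η C ε) (hs : 0 < s)
    (h1 : Real.pi / 2 < η) (h2 : η < Real.pi) (h0 : G (Real.log s : ℂ) = 0) :
    (∫ x : ℝ, G (x + η * Complex.I) / (s - Complex.exp (x + η * Complex.I))).im = 0 := by
  have hp := Real.pi_pos
  set w₀ : ℂ := (Real.log s : ℂ) with hw₀
  have hes : Complex.exp w₀ = s := by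
    rw [hw₀, ← Complex.ofReal_exp, Real.exp_log hs]
  set H : ℂ → ℂ := fun w => - (dslope G w₀ w / dslope Complex.exp w₀ w) with hH
  have hHeq : ∀ w, w ≠ w₀ → H w = G w / (s - Complex.exp w) := by
    intro w hw
    have : w - w₀ ≠ 0 := sub_ne_zero.2 hw
    simp only [hH]
    rw [dslope_of_ne _ hw, dslope_of_ne _ hw, slope_def_module, slope_def_module, h0, hes,
      smul_eq_mul, smul_eq_mul, mul_div_mul_left _ _ (inv_ne_zero this), sub_zero, ← div_neg, neg_sub]
  have hd1 : Differentiable ℂ (dslope G w₀) := by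
    rw [← differentiableOn_univ, Complex.differentiableOn_dslope univ_mem]
    exact h.diff.differentiableOn
  have hd2 : Differentiable ℂ (dslope Complex.exp w₀) := by
    rw [← differentiableOn_univ, Complex.differentiableOn_dslope univ_mem]
    exact Complex.differentiable_exp.differentiableOn
  have hdiff : DifferentiableOn ℂ H {z | z.im ∈ Icc 0 η} := by
    intro w hw
    refine ((hd1 w).div (hd2 w) ?_).neg.differentiableWithinAt
    by_cases hww : w = w₀
    · rw [hww, dslope_same, Complex.deriv_exp]; exact Complex.exp_ne_zero _
    · rw [dslope_of_ne _ hww, slope_def_module, smul_eq_mul, hes]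
      refine mul_ne_zero (inv_ne_zero (sub_ne_zero.2 hww)) (sub_ne_zero.2 ?_)
      exact den_ne hs hw.1 (by linarith [hw.2]) hww
  have hbd : ∀ x y : ℝ, 0 ≤ y → y ≤ η → |Real.log (2 * s)| + |Real.log (s / 2)| + 1 + |Real.log s| ≤ |x| →
      ‖H (x + y * Complex.I)‖ ≤ (C * (2 / (s / 4) + 2 / (1 / 4))) * Real.exp (-ε * |x|) := by
    intro x y hy1 hy2 hx
    have hne : (x + y * Complex.I : ℂ) ≠ w₀ := by
      intro he
      have : x = Real.log s := by
        have := congrArg Complex.re he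
        simpa [hw₀] using this
      rw [this] at hx
      have := abs_nonneg (Real.log (2 * s)); have := abs_nonneg (Real.log (s / 2))
      linarith
    rw [hHeq _ hne, norm_div]
    have e1 := norm_den s x y hs (by have := abs_nonneg (Real.log s); linarith)
    have e2 := h.bound x y hy1 hy2
    have e3 := kernel_bound (s := s / 4) (c := 1 / 4) (by positivity) (by norm_num) h.eps_pos h.eps_le x
    have hpos : 0 < s / 4 + 1 / 4 * Real.exp x := by positivity
    have hCn := h.C_nonneg
    calc _ ≤ C * (Real.exp (ε * x) + Real.exp ((1 - ε) * x)) / (s / 4 + 1 / 4 * Real.exp x) := by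
          gcongr
      _ = C * ((Real.exp (ε * x) + Real.exp ((1 - ε) * x)) / (s / 4 + 1 / 4 * Real.exp x)) := by ring
      _ ≤ C * ((2 / (s / 4) + 2 / (1 / 4)) * Real.exp (-ε * |x|)) :=
          mul_le_mul_of_nonneg_left e3 hCn
      _ = _ := by ring
  have hsh := shift (y₁ := 0) (y₂ := η) (H := H) (by linarith) hdiff h.eps_pos hbd
  have hreal : ∀ T : ℝ, (∫ x in (-T)..T, H (x + (0:ℝ) * Complex.I)).im = 0 := by
    intro T
    have hae : ∀ᵐ x : ℝ, x ≠ Real.log s := by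
      simp [ae_iff]
    have : ∫ x in (-T)..T, H (x + (0:ℝ) * Complex.I) = ∫ x in (-T)..T, (((H x).re : ℝ) : ℂ) := by
      apply intervalIntegral.integral_congr_ae
      filter_upwards [hae] with x hx _
      have hne : (x : ℂ) ≠ w₀ := by
        intro he; apply hx; rw [hw₀] at he; exact_mod_cast he
      simp only [Complex.ofReal_zero, zero_mul, add_zero]
      apply Complex.ext
      · simp
      · rw [Complex.ofReal_im, hHeq _ hne, ← Complex.ofReal_exp, ← Complex.ofReal_sub,
          Complex.div_ofReal_im, h.real, zero_div]
    rw [this, intervalIntegral.integral_ofReal, Complex.ofReal_im]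
  have hHray : ∀ x : ℝ, H (x + η * Complex.I)
      = G (x + η * Complex.I) / (s - Complex.exp (x + η * Complex.I)) := by
    intro x
    apply hHeq
    intro he
    have := congrArg Complex.im he
    simp [hw₀] at this
    linarith
  have hI := h.ray_integrable hs h1 h2
  simp_rw [← hHray] at hI ⊢
  have hlim := intervalIntegral_tendsto_integral hI tendsto_neg_atTop_atBot tendsto_id
  have hsum := (Complex.continuous_im.tendsto _).comp (hsh.add hlim)
  refine tendsto_nhds_unique ?_ (tendsto_const_nhds (x := (0:ℝ)) (f := (atTop : Filter ℝ)))
  rw [zero_add] at hsum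
  refine hsum.congr fun T => ?_
  simp only [Function.comp, id]
  rw [sub_add_cancel, hreal]

lemma Nice.laplace {G : ℂ → ℂ} {η C ε s : ℝ} (h : Nice G η C ε) (hs : 0 < s)
    (h1 : Real.pi / 2 < η) (h2 : η < Real.pi) :
    IntegrableOn (fun t : ℝ => Real.exp (-s * t) *
      (∫ x : ℝ, Complex.exp (t * Complex.exp (x + η * Complex.I)) * G (x + η * Complex.I)).im)
      (Ioi 0) ∧
    ∫ t in Ioi (0:ℝ), Real.exp (-s * t) *
      (∫ x : ℝ, Complex.exp (t * Complex.exp (x + η * Complex.I)) * G (x + η * Complex.I)).im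
      = (∫ x : ℝ, G (x + η * Complex.I) / (s - Complex.exp (x + η * Complex.I))).im := by
  have hp := Real.pi_pos
  have hc : 0 < -Real.cos η := by
    have := Real.cos_neg_of_pi_div_two_lt_of_lt h1 (by linarith); linarith
  set Φ : ℝ × ℝ → ℂ := fun p => Complex.exp ((Complex.exp (p.2 + η * Complex.I) - s) * p.1) *
    G (p.2 + η * Complex.I) with hΦ
  have hden : ∀ x : ℝ, 0 < s + (-Real.cos η) * Real.exp x := fun x => by positivity
  have hre : ∀ x : ℝ, (Complex.exp (x + η * Complex.I) - s).re
      = - (s + (-Real.cos η) * Real.exp x) := by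
    intro x
    rw [Complex.sub_re, re_exp_line, Complex.ofReal_re]; ring
  have hre0 : ∀ x : ℝ, (Complex.exp (x + η * Complex.I) - s).re < 0 := by
    intro x; rw [hre]; linarith [hden x]
  have hcont : Continuous Φ := by
    have := h.diff.continuous
    fun_prop
  have hIntg : Integrable Φ ((volume.restrict (Ioi (0:ℝ))).prod volume) := by
    rw [integrable_prod_iff' hcont.aestronglyMeasurable]
    constructor
    · refine Eventually.of_forall fun x => ?_
      exact (integrableOn_exp_mul_complex_Ioi (hre0 x) 0).mul_const (G (x + η * Complex.I))
    · have hval : ∀ x : ℝ, ∫ t in Ioi (0:ℝ), ‖Φ (t, x)‖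
          = ‖G (x + η * Complex.I)‖ / (s + (-Real.cos η) * Real.exp x) := by
        intro x
        have : ∀ t : ℝ, ‖Φ (t, x)‖ =
            Real.exp (- (s + (-Real.cos η) * Real.exp x) * t) * ‖G (x + η * Complex.I)‖ := by
          intro t
          simp only [hΦ]
          rw [norm_mul, Complex.norm_exp, Complex.re_mul_ofReal, hre]
        simp_rw [this]
        rw [integral_mul_const, integral_exp_mul_Ioi (by linarith [hden x])]
        have := (hden x).ne'
        rw [mul_zero, Real.exp_zero, neg_div_neg_eq]
        ring
      simp_rw [hval]
      refine Integrable.mono' (((integrable_exp_neg_abs h.eps_pos).const_mul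
        (2 / s + 2 / (-Real.cos η))).const_mul C) ?_ (Eventually.of_forall fun x => ?_)
      · have := h.diff.continuous
        exact Continuous.aestronglyMeasurable
          (Continuous.div (by fun_prop) (by fun_prop) fun x => (hden x).ne')
      · rw [Real.norm_of_nonneg (div_nonneg (norm_nonneg _) (hden x).le)]
        exact h.ray_bound hs (by linarith) hc x
  have hin : ∀ t : ℝ, ∫ x : ℝ, Φ (t, x) = ((Real.exp (-s * t) : ℝ) : ℂ) *
      ∫ x : ℝ, Complex.exp (t * Complex.exp (x + η * Complex.I)) * G (x + η * Complex.I) := by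
    intro t
    rw [← integral_const_mul]
    congr 1; ext x
    simp only [hΦ]
    rw [Complex.ofReal_exp, ← mul_assoc, ← Complex.exp_add]
    push_cast
    ring_nf
  have hil := hIntg.integral_prod_left
  have him : ∀ t : ℝ, Real.exp (-s * t) *
      (∫ x : ℝ, Complex.exp (t * Complex.exp (x + η * Complex.I)) * G (x + η * Complex.I)).im
      = (∫ x : ℝ, Φ (t, x)).im := by
    intro t; rw [hin, Complex.im_ofReal_mul]
  simp_rw [him]
  refine ⟨hil.im, ?_⟩
  have e1 := integral_im hil
  simp only [RCLike.im_to_complex] at e1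
  rw [e1, integral_integral_swap hIntg]
  congr 2; ext x
  simp only [hΦ]
  rw [integral_mul_const, integral_exp_mul_complex_Ioi (hre0 x)]
  rw [← neg_sub (s : ℂ), Complex.ofReal_zero, mul_zero, Complex.exp_zero, neg_div_neg_eq]
  ring

lemma nice_half {η ε : ℝ} (h1 : 0 < ε) (h2 : ε ≤ 1 / 2) :
    Nice (fun w => Complex.exp ((1 / 2 : ℝ) * w)) η 1 ε := by
  refine ⟨by fun_prop, fun x => ?_, h1, h2, zero_le_one, fun x y _ _ => ?_⟩
  · rw [← Complex.ofReal_mul, ← Complex.ofReal_exp, Complex.ofReal_im]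
  · rw [norm_exp_line, one_mul]
    rcases le_total x 0 with hx | hx
    · have : Real.exp (1 / 2 * x) ≤ Real.exp (ε * x) := Real.exp_le_exp.2 (by nlinarith)
      have := Real.exp_pos ((1 - ε) * x)
      linarith
    · have : Real.exp (1 / 2 * x) ≤ Real.exp ((1 - ε) * x) := Real.exp_le_exp.2 (by nlinarith)
      have := Real.exp_pos (ε * x)
      linarith

lemma half_residue {η s : ℝ} (hs : 0 < s) (h1 : Real.pi / 2 < η) (h2 : η < Real.pi) :
    (∫ x : ℝ, Complex.exp ((1 / 2 : ℝ) * (x + η * Complex.I)) /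
      (s - Complex.exp (x + η * Complex.I))).im = Real.pi * (1 / s) ^ (1 / 2 : ℝ) := by
  have hn := nice_half (η := η) (ε := 1 / 2) (by norm_num) le_rfl
  rw [← (hn.laplace hs h1 h2).2]
  have hG : Real.Gamma (1 / 2) ≠ 0 := (Real.Gamma_pos_of_pos (by norm_num)).ne'
  have : ∫ t in Ioi (0:ℝ), Real.exp (-s * t) *
      (∫ x : ℝ, Complex.exp (t * Complex.exp (x + η * Complex.I)) *
        Complex.exp ((1 / 2 : ℝ) * (x + η * Complex.I))).im
      = ∫ t in Ioi (0:ℝ), (Real.pi / Real.Gamma (1 / 2)) *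
        (t ^ ((1 / 2 : ℝ) - 1) * Real.exp (-(s * t))) := by
    refine setIntegral_congr_fun measurableSet_Ioi fun t ht => ?_
    rw [hankel_mono (by norm_num) ht h1 h2]
    norm_num
    ring
  rw [this, integral_const_mul, Real.integral_rpow_mul_exp_neg_mul_Ioi (by norm_num) hs]
  field_simp

lemma Nice.residue {G : ℂ → ℂ} {η C ε s : ℝ} (h : Nice G η C ε) (hs : 0 < s)
    (h1 : Real.pi / 2 < η) (h2 : η < Real.pi) :
    (∫ x : ℝ, G (x + η * Complex.I) / (s - Complex.exp (x + η * Complex.I))).im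
      = Real.pi * ((G (Real.log s : ℂ)).re / s) := by
  set K : ℂ → ℂ := fun w => Complex.exp ((1 / 2 : ℝ) * w) with hK
  have hn := nice_half (η := η) h.eps_pos h.eps_le
  set c : ℝ := (G (Real.log s : ℂ)).re / Real.exp (1 / 2 * Real.log s) with hcdef
  have hN : Nice (fun w => G w - c * K w) η (C + |c|) ε := by
    refine ⟨?_, fun x => ?_, h.eps_pos, h.eps_le, by have := h.C_nonneg; positivity, fun x y hy hy2 => ?_⟩
    · have := h.diff; have := hn.diff; fun_prop
    · rw [Complex.sub_im, Complex.im_ofReal_mul, h.real, hn.real]; simp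
    · refine (norm_sub_le _ _).trans ?_
      rw [norm_mul, Complex.norm_real, Real.norm_eq_abs, add_mul]
      have e1 := h.bound x y hy hy2
      have e2 := hn.bound x y hy hy2
      rw [one_mul] at e2
      exact add_le_add e1 (mul_le_mul_of_nonneg_left e2 (abs_nonneg c))
  have hz : (fun w => G w - c * K w) (Real.log s : ℂ) = 0 := by
    have hne := (Real.exp_pos (1 / 2 * Real.log s)).ne'
    have e1 : K (Real.log s : ℂ) = ((Real.exp (1 / 2 * Real.log s) : ℝ) : ℂ) := by
      simp only [hK]
      rw [← Complex.ofReal_mul, ← Complex.ofReal_exp]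
    have e2 : G (Real.log s : ℂ) = (((G (Real.log s : ℂ)).re : ℝ) : ℂ) := by
      apply Complex.ext
      · simp
      · rw [h.real, Complex.ofReal_im]
    simp only
    rw [e1, ← Complex.ofReal_mul, hcdef, div_mul_cancel₀ _ hne, ← e2, sub_self]
  have hz' := hN.contour hs h1 h2 hz
  have hi1 := h.ray_integrable hs h1 h2
  have hi2 := hn.ray_integrable hs h1 h2
  have hsplit : ∫ x : ℝ, (G (x + η * Complex.I) - c * K (x + η * Complex.I)) /
      (s - Complex.exp (x + η * Complex.I)) =
      (∫ x : ℝ, G (x + η * Complex.I) / (s - Complex.exp (x + η * Complex.I))) -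
      c * ∫ x : ℝ, K (x + η * Complex.I) / (s - Complex.exp (x + η * Complex.I)) := by
    rw [← integral_const_mul, ← integral_sub hi1 (hi2.const_mul _)]
    congr 1; ext x; ring
  change (∫ x : ℝ, (G (x + η * Complex.I) - c * K (x + η * Complex.I)) /
      (s - Complex.exp (x + η * Complex.I))).im = 0 at hz'
  rw [hsplit, Complex.sub_im, Complex.im_ofReal_mul, half_residue hs h1 h2] at hz'
  rw [sub_eq_zero.1 hz', hcdef]
  have e3 : (1 / s) ^ (1 / 2 : ℝ) = Real.exp (1 / 2 * Real.log s) / s := by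
    rw [Real.rpow_def_of_pos (by positivity), eq_div_iff hs.ne']
    nth_rewrite 2 [← Real.exp_log hs]
    rw [← Real.exp_add, one_div, Real.log_inv]
    ring_nf
  rw [e3]
  have := (Real.exp_pos (1 / 2 * Real.log s)).ne'
  field_simp

noncomputable def GN (a δ l : ℝ) (N : ℕ) (w : ℂ) : ℂ :=
  Complex.exp ((1 - δ : ℝ) * w) * (Complex.exp (-l * Complex.exp (a * w)) -
    ∑ k ∈ Finset.range N, (-l * Complex.exp (a * w)) ^ k / (k.factorial : ℂ))

lemma GN_real (a δ l : ℝ) (N : ℕ) (x : ℝ) : GN a δ l N x =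
    ((Real.exp ((1 - δ) * x) * (Real.exp (-l * Real.exp (a * x)) -
    ∑ k ∈ Finset.range N, (-l * Real.exp (a * x)) ^ k / (k.factorial : ℝ)) : ℝ) : ℂ) := by
  unfold GN
  push_cast
  rfl

lemma GN_nice {a δ l η : ℝ} {N : ℕ} (ha : 0 < a) (hl : 0 < l) (hη : a * η < Real.pi / 2)
    (hμ : 0 < 1 - δ + a * N) (hN : N = 0 ∨ 1 - δ + a * N ≤ a) :
    ∃ C ε, Nice (GN a δ l N) η C ε := by
  have hp := Real.pi_pos
  set μ := 1 - δ + a * N with hμdef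
  set ε := min μ (1 / 2) with hεdef
  have hε : 0 < ε := lt_min hμ (by norm_num)
  have hε2 : ε ≤ 1 / 2 := min_le_right _ _
  have hεμ : ε ≤ μ := min_le_left _ _
  have hnorm : ∀ x y : ℝ, ‖-(l:ℂ) * Complex.exp (a * (x + y * Complex.I))‖ = l * Real.exp (a * x) := by
    intro x y
    rw [norm_mul, norm_exp_line, norm_neg, Complex.norm_real, Real.norm_of_nonneg hl.le]
  have hneg : ∀ x y : ℝ, x ≤ 0 → ‖GN a δ l N (x + y * Complex.I)‖
      ≤ (l ^ N * Real.exp l) * Real.exp (ε * x) := by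
    intro x y hx
    unfold GN
    rw [norm_mul, norm_exp_line]
    have e1 := Complex.norm_exp_sub_sum_le_norm_mul_exp (-(l:ℂ) * Complex.exp (a * (x + y * Complex.I))) N
    rw [hnorm] at e1
    have e2 : l * Real.exp (a * x) ≤ l := by
      have : Real.exp (a * x) ≤ 1 := Real.exp_le_one_iff.2 (by nlinarith)
      nlinarith
    have e3 : Real.exp (l * Real.exp (a * x)) ≤ Real.exp l := Real.exp_le_exp.2 e2
    calc _ ≤ Real.exp ((1 - δ) * x) * ((l * Real.exp (a * x)) ^ N * Real.exp (l * Real.exp (a * x))) := by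
          gcongr
      _ ≤ Real.exp ((1 - δ) * x) * ((l * Real.exp (a * x)) ^ N * Real.exp l) := by
          gcongr
      _ = (l ^ N * Real.exp l) * Real.exp (μ * x) := by
          rw [mul_pow, ← Real.exp_nat_mul, hμdef,
            show (1 - δ + a * N) * x = (1 - δ) * x + N * (a * x) by ring, Real.exp_add]
          ring
      _ ≤ _ := by
          have : Real.exp (μ * x) ≤ Real.exp (ε * x) := Real.exp_le_exp.2 (by nlinarith)
          gcongr
  have hposb : ∃ D : ℝ, 0 ≤ D ∧ ∀ x y : ℝ, 0 ≤ x → 0 ≤ y → y ≤ η →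
      ‖GN a δ l N (x + y * Complex.I)‖ ≤ D := by
    have hre : ∀ x y : ℝ, ‖Complex.exp (-(l:ℂ) * Complex.exp (a * (x + y * Complex.I)))‖
        = Real.exp (-l * (Real.exp (a * x) * Real.cos (a * y))) := by
      intro x y
      have := norm_expexp_line (-l) (a * x) (a * y)
      push_cast at this
      rw [← this]; ring_nf
    have hcos : ∀ y : ℝ, 0 ≤ y → y ≤ η → Real.cos (a * η) ≤ Real.cos (a * y) := by
      intro y h0 h1
      exact Real.cos_le_cos_of_nonneg_of_le_pi (by positivity) (by linarith) (by nlinarith)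
    rcases Nat.eq_zero_or_pos N with h0 | hNpos
    · by_cases hη0 : 0 ≤ η
      swap
      · exact ⟨0, le_rfl, fun x y _ h1 h2 => absurd (h1.trans h2) hη0⟩
      have hcp : 0 < Real.cos (a * η) :=
        Real.cos_pos_of_mem_Ioo ⟨by have : 0 ≤ a * η := by positivity
                                    linarith, hη⟩
      obtain ⟨D, hD, hDb⟩ := exp_bound (b := l * Real.cos (a * η)) (by positivity) ha (1 - δ)
      refine ⟨D, hD.le, fun x y hx hy1 hy2 => le_trans ?_ (hDb x hx)⟩
      unfold GN
      rw [h0, Finset.range_zero, Finset.sum_empty, sub_zero, norm_mul, norm_exp_line, hre]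
      gcongr Real.exp ((1 - δ) * x) * Real.exp ?_
      have := mul_le_mul_of_nonneg_left (hcos y hy1 hy2) (mul_pos hl (Real.exp_pos (a * x))).le
      linarith
    · have hμa : μ ≤ a := by
        rcases hN with h | h
        · omega
        · exact h
      refine ⟨1 + ∑ k ∈ Finset.range N, l ^ k / (k.factorial : ℝ), by positivity,
        fun x y hx hy1 hy2 => ?_⟩
      have hcp : 0 ≤ Real.cos (a * y) :=
        Real.cos_nonneg_of_mem_Icc ⟨by have : 0 ≤ a * y := by positivity
                                       linarith, by nlinarith⟩
      have hB : 1 ≤ Real.exp (a * (N - 1) * x) := by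
        have : (1:ℝ) ≤ N := by exact_mod_cast hNpos
        exact Real.one_le_exp (mul_nonneg (mul_nonneg ha.le (by linarith)) hx)
      have e1 : ‖Complex.exp (-(l:ℂ) * Complex.exp (a * (x + y * Complex.I)))‖
          ≤ Real.exp (a * (N - 1) * x) := by
        rw [hre]
        refine le_trans (Real.exp_le_one_iff.2 ?_) hB
        have : 0 ≤ l * (Real.exp (a * x) * Real.cos (a * y)) := by positivity
        linarith
      have e2 : ‖∑ k ∈ Finset.range N, (-(l:ℂ) * Complex.exp (a * (x + y * Complex.I))) ^ k /
          (k.factorial : ℂ)‖ ≤ ∑ k ∈ Finset.range N, l ^ k / (k.factorial : ℝ) * Real.exp (a * (N - 1) * x) := by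
        refine (norm_sum_le _ _).trans (Finset.sum_le_sum fun k hk => ?_)
        rw [norm_div, norm_pow, hnorm, Complex.norm_natCast, mul_pow, ← Real.exp_nat_mul, mul_div_right_comm]
        refine mul_le_mul_of_nonneg_left (Real.exp_le_exp.2 ?_) (by positivity)
        have hk' : (k:ℝ) ≤ N - 1 := by
          have : k + 1 ≤ N := Finset.mem_range.1 hk
          have : (k:ℝ) + 1 ≤ N := by exact_mod_cast this
          linarith
        have := mul_le_mul_of_nonneg_right hk' (mul_nonneg ha.le hx)
        linarith
      rw [← Finset.sum_mul] at e2
      unfold GN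
      rw [norm_mul, norm_exp_line]
      have e3 := (norm_sub_le (Complex.exp (-(l:ℂ) * Complex.exp (a * (x + y * Complex.I)))) (∑ k ∈ Finset.range N, (-(l:ℂ) * Complex.exp (a * (x + y * Complex.I))) ^ k /
          (k.factorial : ℂ))).trans (add_le_add e1 e2)
      have e4 : Real.exp ((1 - δ) * x) * Real.exp (a * (N - 1) * x) ≤ 1 := by
        rw [← Real.exp_add]
        apply Real.exp_le_one_iff.2
        have : (μ - a) * x ≤ 0 := mul_nonpos_of_nonpos_of_nonneg (by linarith) hx
        rw [hμdef] at this
        linarith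
      set S := ∑ k ∈ Finset.range N, l ^ k / (k.factorial : ℝ) with hS
      have hS0 : 0 ≤ S := by positivity
      calc _ ≤ Real.exp ((1 - δ) * x) * (Real.exp (a * (N - 1) * x) + S * Real.exp (a * (N - 1) * x)) := by
            gcongr
        _ = (Real.exp ((1 - δ) * x) * Real.exp (a * (N - 1) * x)) * (1 + S) := by ring
        _ ≤ 1 * (1 + S) := by gcongr
        _ = _ := one_mul _
  obtain ⟨D, hD, hDb⟩ := hposb
  refine ⟨l ^ N * Real.exp l + D, ε, ?_, fun x => ?_, hε, hε2, by positivity, fun x y hy1 hy2 => ?_⟩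
  · unfold GN; fun_prop
  · rw [GN_real, Complex.ofReal_im]
  · have p1 := Real.exp_pos (ε * x)
    have p2 := Real.exp_pos ((1 - ε) * x)
    have p3 : 0 < l ^ N * Real.exp l := by positivity
    rcases le_total x 0 with hx | hx
    · have := hneg x y hx
      nlinarith [mul_nonneg hD p1.le, mul_nonneg hD p2.le, mul_pos p3 p2]
    · have e := hDb x y hx hy1 hy2
      have : 1 ≤ Real.exp (ε * x) := Real.one_le_exp (by positivity)
      nlinarith [mul_nonneg hD p2.le, mul_pos p3 p1, mul_pos p3 p2]

lemma exp_tail (z : ℂ) (N : ℕ) :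
    HasSum (fun k : ℕ => z ^ (k + N) / ((k + N).factorial : ℂ))
      (Complex.exp z - ∑ k ∈ Finset.range N, z ^ k / (k.factorial : ℂ)) := by
  have h := NormedSpace.expSeries_div_hasSum_exp z
  rw [← Complex.exp_eq_exp_ℂ] at h
  exact (hasSum_nat_add_iff' N).2 h

lemma real_exp_tail (z : ℝ) (N : ℕ) :
    HasSum (fun k : ℕ => z ^ (k + N) / ((k + N).factorial : ℝ))
      (Real.exp z - ∑ k ∈ Finset.range N, z ^ k / (k.factorial : ℝ)) := by
  have h := NormedSpace.expSeries_div_hasSum_exp z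
  rw [← Real.exp_eq_exp_ℝ] at h
  exact (hasSum_nat_add_iff' N).2 h

lemma real_tail_le {z : ℝ} (hz : 0 ≤ z) (N : ℕ) :
    Real.exp z - ∑ k ∈ Finset.range N, z ^ k / (k.factorial : ℝ) ≤ z ^ N * Real.exp z := by
  have h := Complex.norm_exp_sub_sum_le_norm_mul_exp (z : ℂ) N
  rw [Complex.norm_real, Real.norm_of_nonneg hz] at h
  refine le_trans ?_ h
  refine le_trans (le_of_eq ?_) (Complex.re_le_norm _)
  have : Complex.exp z - ∑ k ∈ Finset.range N, (z:ℂ) ^ k / (k.factorial : ℂ) =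
    ((Real.exp z - ∑ k ∈ Finset.range N, z ^ k / (k.factorial : ℝ) : ℝ) : ℂ) := by
    push_cast; rfl
  rw [this, Complex.ofReal_re]

lemma real_tail_nonneg {z : ℝ} (hz : 0 ≤ z) (N : ℕ) :
    0 ≤ Real.exp z - ∑ k ∈ Finset.range N, z ^ k / (k.factorial : ℝ) :=
  (real_exp_tail z N).nonneg fun k => by positivity

lemma series {a δ l η t : ℝ} {N : ℕ} (ha : 0 < a) (ha1 : a < 1) (hl : 0 < l) (ht : 0 < t)
    (h1 : Real.pi / 2 < η) (h2 : η < Real.pi) (hμ : 0 < 1 - δ + a * N) :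
    HasSum (fun k : ℕ => (-l) ^ (k + N) / ((k + N).factorial : ℝ) *
      (Real.pi * (t ^ (-(1 - δ + a * (k + N : ℕ))) / Real.Gamma (1 - (1 - δ + a * (k + N : ℕ))))))
      (∫ x : ℝ, Complex.exp (t * Complex.exp (x + η * Complex.I)) *
        GN a δ l N (x + η * Complex.I)).im := by
  have hp := Real.pi_pos
  have hc : 0 < -Real.cos η := by
    have := Real.cos_neg_of_pi_div_two_lt_of_lt h1 (by linarith); linarith
  set F : ℕ → ℝ → ℂ := fun k x => (((-l) ^ (k + N) / ((k + N).factorial : ℝ) : ℝ) : ℂ) *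
    (Complex.exp (t * Complex.exp (x + η * Complex.I)) *
      Complex.exp ((1 - δ + a * (k + N : ℕ) : ℝ) * (x + η * Complex.I))) with hF
  set B : ℝ → ℝ := fun x => Real.exp (-(t * -Real.cos η) * Real.exp x) * Real.exp ((1 - δ) * x) with hB
  set bd : ℕ → ℝ → ℝ := fun k x => B x *
    ((l * Real.exp (a * x)) ^ (k + N) / ((k + N).factorial : ℝ)) with hbd
  have hbs : ∀ x, HasSum (fun k => bd k x) (B x * (Real.exp (l * Real.exp (a * x)) -
      ∑ k ∈ Finset.range N, (l * Real.exp (a * x)) ^ k / (k.factorial : ℝ))) := fun x =>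
    (real_exp_tail _ N).mul_left _
  obtain ⟨C, hC, hCb⟩ := exp_abs_bound (a := a) (b := t * -Real.cos η) (l := l)
    (μ := 1 - δ + a * N) ha ha1 (by positivity) hl hμ
  have hsum := hasSum_integral_of_dominated_convergence (μ := volume) (F := F)
    (f := fun x : ℝ => Complex.exp (t * Complex.exp (x + η * Complex.I)) *
        GN a δ l N (x + η * Complex.I)) bd
    (fun k => Continuous.aestronglyMeasurable (by simp only [hF]; fun_prop))
    (fun k => Eventually.of_forall fun x => ?_)
    (Eventually.of_forall fun x => (hbs x).summable) ?_ (Eventually.of_forall fun x => ?_)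
  · have him := Complex.imCLM.hasSum hsum
    simp only [Complex.imCLM_apply] at him
    refine him.congr_fun ?_ |> fun h => h
    intro k
    simp only [hF]
    rw [integral_const_mul, Complex.im_ofReal_mul, hankel_mono _ ht h1 h2]
    have : 0 ≤ a * (k:ℝ) := by positivity
    push_cast
    linarith
  · simp only [hF, hbd, hB]
    rw [norm_mul, norm_mul, norm_expexp_line, norm_exp_line, Complex.norm_real, norm_div, norm_pow,
      norm_neg, Real.norm_of_nonneg hl.le, Real.norm_natCast, mul_pow, ← Real.exp_nat_mul]
    apply le_of_eq
    rw [show (1 - δ + a * (k + N : ℕ)) * x = (1 - δ) * x + (k + N : ℕ) * (a * x) by ring, Real.exp_add,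
      show t * (Real.exp x * Real.cos η) = -(t * -Real.cos η) * Real.exp x by ring]
    ring
  · simp_rw [fun x => (hbs x).tsum_eq]
    refine Integrable.mono' ((integrable_exp_neg_abs hμ).const_mul (l ^ N * C)) ?_
      (Eventually.of_forall fun x => ?_)
    · exact Continuous.aestronglyMeasurable (by simp only [hB]; fun_prop)
    · have hz : 0 ≤ l * Real.exp (a * x) := by positivity
      have hBp : 0 < B x := by simp only [hB]; positivity
      rw [Real.norm_of_nonneg (mul_nonneg hBp.le (real_tail_nonneg hz N))]
      refine le_trans (mul_le_mul_of_nonneg_left (real_tail_le hz N) hBp.le) ?_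
      have hb := mul_le_mul_of_nonneg_left (hCb x) (show 0 ≤ l ^ N by positivity)
      rw [← mul_assoc (l ^ N) C] at hb
      refine le_trans (le_of_eq ?_) hb
      simp only [hB]
      rw [mul_pow, ← Real.exp_nat_mul,
        show (1 - δ + a * N) * x = (1 - δ) * x + N * (a * x) by ring, Real.exp_add ((1 - δ) * x)]
      ring
  · have e := (exp_tail (-l * Complex.exp (a * (x + η * Complex.I))) N).mul_left
      (Complex.exp (t * Complex.exp (x + η * Complex.I)) * Complex.exp ((1 - δ : ℝ) * (x + η * Complex.I)))
    unfold GN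
    rw [← mul_assoc]
    refine e.congr_fun ?_ |> fun h => h
    intro k
    simp only [hF]
    rw [mul_pow, ← Complex.exp_nat_mul]
    rw [show ((1 - δ + a * (k + N : ℕ) : ℝ) : ℂ) * (x + η * Complex.I) =
      (1 - δ : ℝ) * (x + η * Complex.I) + (k + N : ℕ) * (a * (x + η * Complex.I)) by push_cast; ring,
      Complex.exp_add ((1 - δ : ℝ) * (x + η * Complex.I : ℂ))]
    rw [Complex.ofReal_div, Complex.ofReal_pow, Complex.ofReal_neg, Complex.ofReal_natCast]
    ring

lemma exists_N {a δ : ℝ} (ha : 0 < a) :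
    ∃ N : ℕ, 0 < 1 - δ + a * N ∧ (N = 0 ∨ 1 - δ + a * N ≤ a) := by
  have hex : ∃ N : ℕ, 0 < 1 - δ + a * N := by
    obtain ⟨n, hn⟩ := exists_nat_gt ((δ - 1) / a)
    rw [div_lt_iff₀ ha] at hn
    exact ⟨n, by linarith⟩
  classical
  refine ⟨Nat.find hex, Nat.find_spec hex, ?_⟩
  rcases Nat.eq_zero_or_pos (Nat.find hex) with h | h
  · exact Or.inl h
  · right
    have := Nat.find_min hex (Nat.sub_lt h one_pos)
    rw [Nat.cast_sub (show 1 ≤ Nat.find hex from h), Nat.cast_one] at this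
    linarith

end WL

open WL in
theorem wright_laplace (γ δ lam : ℝ) (hγ₁ : -1 < γ) (hγ₂ : γ < 0) (hlam : 0 < lam)
    (s : ℝ) (hs : 0 < s) :
    ∫ t in Set.Ioi (0 : ℝ), Real.exp (-s * t) * (t ^ (δ - 1) * wright γ δ (-lam * t ^ γ))
      = s ^ (-δ) * Real.exp (-lam * s ^ (-γ)) := by
  obtain ⟨a, rfl⟩ : ∃ a, γ = -a := ⟨-γ, by ring⟩
  have ha : 0 < a := by linarith
  have ha1 : a < 1 := by linarith
  have hp := Real.pi_pos
  obtain ⟨N, hμ, hN⟩ := exists_N (δ := δ) ha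
  set η := Real.pi * (3 - a) / 4 with hη
  have h1 : Real.pi / 2 < η := by rw [hη]; nlinarith
  have h2 : η < Real.pi := by rw [hη]; nlinarith
  have h3 : a * η < Real.pi / 2 := by
    rw [hη]; nlinarith [mul_pos hp (mul_pos (sub_pos.2 ha1) (show 0 < 2 - a by linarith))]
  obtain ⟨C, ε, hG⟩ := GN_nice (δ := δ) ha hlam h3 hμ hN
  set c : ℕ → ℝ := fun k => (-lam) ^ k / (k.factorial : ℝ) with hc
  set T : ℕ → ℝ → ℝ := fun k t => c k *
    (t ^ (-(1 - δ + a * k)) / Real.Gamma (1 - (1 - δ + a * k))) with hT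
  set J : ℝ → ℝ := fun t => (∫ x : ℝ, Complex.exp (t * Complex.exp (x + η * Complex.I)) *
        GN a δ lam N (x + η * Complex.I)).im with hJ
  have hfun : ∀ t ∈ Ioi (0:ℝ), Real.exp (-s * t) * (t ^ (δ - 1) * wright (-a) δ (-lam * t ^ (-a)))
      = (∑ k ∈ Finset.range N, Real.exp (-s * t) * T k t) + Real.pi⁻¹ * (Real.exp (-s * t) * J t) := by
    intro t ht
    have ht0 : 0 < t := ht
    have hterm : ∀ k : ℕ, t ^ (δ - 1) * ((-lam * t ^ (-a)) ^ k /
        ((k.factorial : ℝ) * Real.Gamma (-a * k + δ))) = T k t := by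
      intro k
      simp only [hT, hc]
      rw [mul_pow, ← Real.rpow_natCast (t ^ (-a)), ← Real.rpow_mul ht0.le,
        show -(1 - δ + a * k) = (δ - 1) + -a * k by ring, Real.rpow_add ht0,
        show 1 - (1 - δ + a * k) = -a * k + δ by ring, div_mul_eq_div_div]
      ring
    have hser := (series (δ := δ) ha ha1 hlam ht0 h1 h2 hμ).mul_left Real.pi⁻¹
    have hser' : HasSum (fun k => T (k + N) t) (Real.pi⁻¹ * J t) := by
      refine hser.congr_fun ?_ |> fun h => h
      intro k
      simp only [hT, hc]
      field_simp
    have hfull := (hasSum_nat_add_iff (f := fun k => T k t) N).1 hser'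
    unfold wright
    rw [← tsum_mul_left]
    simp_rw [hterm]
    rw [hfull.tsum_eq, ← Finset.mul_sum]
    ring
  rw [setIntegral_congr_fun measurableSet_Ioi hfun]
  have hTint : ∀ k ∈ Finset.range N,
      IntegrableOn (fun t => Real.exp (-s * t) * T k t) (Ioi 0) ∧
      ∫ t in Ioi (0:ℝ), Real.exp (-s * t) * T k t = c k * s ^ (a * k - δ) := by
    intro k hk
    have hk' : k + 1 ≤ N := Finset.mem_range.1 hk
    have hk2 : (k:ℝ) + 1 ≤ N := by exact_mod_cast hk'
    have hpos : 0 < 1 - (1 - δ + a * k) := by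
      rcases hN with h | h
      · omega
      · nlinarith
    set ν := 1 - (1 - δ + a * k) with hν
    have hΓ := Real.Gamma_pos_of_pos hpos
    have hval := Real.integral_rpow_mul_exp_neg_mul_Ioi hpos hs
    have hI : IntegrableOn (fun t : ℝ => t ^ (ν - 1) * Real.exp (-(s * t))) (Ioi 0) := by
      apply Integrable.of_integral_ne_zero
      rw [hval]
      positivity
    have hf : ∀ t : ℝ, Real.exp (-s * t) * T k t =
        (c k / Real.Gamma ν) * (t ^ (ν - 1) * Real.exp (-(s * t))) := by
      intro t
      simp only [hT]
      rw [← hν, show -(1 - δ + a * k) = ν - 1 by rw [hν]; ring, neg_mul]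
      ring
    simp_rw [hf]
    refine ⟨hI.const_mul _, ?_⟩
    rw [integral_const_mul, hval, one_div, Real.inv_rpow hs.le, ← Real.rpow_neg hs.le,
      show -ν = a * k - δ by rw [hν]; ring]
    field_simp
  obtain ⟨hJi, hJv⟩ := hG.laplace hs h1 h2
  rw [integral_add (integrable_finsetSum _ fun k hk => (hTint k hk).1) (hJi.const_mul _),
    integral_finsetSum _ fun k hk => (hTint k hk).1, integral_const_mul, hJv,
    hG.residue hs h1 h2, Finset.sum_congr rfl fun k hk => (hTint k hk).2, GN_real, Complex.ofReal_re]
  have e1 : ∀ m : ℝ, Real.exp (m * Real.log s) = s ^ m := by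
    intro m; rw [Real.rpow_def_of_pos hs, mul_comm]
  rw [e1, e1, neg_neg]
  have e2 : s ^ (1 - δ) = s * s ^ (-δ) := by
    rw [show 1 - δ = 1 + -δ by ring, Real.rpow_add hs, Real.rpow_one]
  have e3 : ∀ k : ℕ, c k * s ^ (a * k - δ) = s ^ (-δ) * ((-lam * s ^ a) ^ k / (k.factorial : ℝ)) := by
    intro k
    simp only [hc]
    rw [mul_pow, ← Real.rpow_natCast (s ^ a), ← Real.rpow_mul hs.le,
      show a * k - δ = a * k + -δ by ring, Real.rpow_add hs]
    ring
  simp_rw [e3]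
  rw [← Finset.mul_sum, e2]
  have := hs.ne'
  field_simp
  ring
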